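/- (Lemma 4.1, probabilistic form.) For every c > 0 there exists a constant C such that the following holds for every integer n ≥ 2. Let H = (V, (e_i)_{i ∈ I}) be a hypergraph with all hyperedges nonempty and |V| + |I| ≤ n. Let T = ⌈C · log₂ n⌉ and let (X_u(i,j))_{u ∈ V, 0 ≤ i ≤ ⌊log₂ n⌋, 1 ≤ j ≤ T} be mutually independent Bernoulli random variables where X_u(i,j) has success probability 2^{-i}. Then with probability at least 1 − n^{-c}, for every hyperedge index ℓ ∈ I there exists a pair (i, j) with 0 ≤ i ≤ ⌊log₂ n⌋ and 1 ≤ j ≤ T such that exactly one vertex u ∈ e_ℓ satisfies X_u(i,j) = 1. Consequently, assigning to each hyperedge e_ℓ as its color the (lexicographically) first such pair (i,j), and to each vertex u the color set cs(u) = {(i,j) : X_u(i,j) = 1}, yields with probability at least 1 − n^{-c} a feasible HBD solution with palette size (⌊log₂ n⌋ + 1) · T = O(log² n): for every ℓ ∈ I there is exactly one vertex v ∈ e_ℓ whose color set contains the color of e_ℓ. -/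

import Mathlib

open MeasureTheory ProbabilityTheory

/-- The probability that exactly one of the independent Bernoulli variables indexed by `S`
succeeds is at least `|S| p (1 - p) ^ (|S| - 1)`. -/
lemma measure_existsUnique_bernoulli_ge {ι Ω : Type*} [DecidableEq ι] {_ : MeasurableSpace Ω}
    {μ : Measure Ω} [IsProbabilityMeasure μ] {Y : ι → Ω → Bool} (hm : ∀ u, Measurable (Y u))
    (hY : iIndepFun Y μ) {p : ℝ} (hp : 0 ≤ p) (hp1 : p ≤ 1) (S : Finset ι)
    (hYp : ∀ u ∈ S, μ {ω | Y u ω = true} = ENNReal.ofReal p) :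
    ENNReal.ofReal (S.card * (p * (1 - p) ^ (S.card - 1))) ≤
      μ {ω | ∃! u, u ∈ S ∧ Y u ω = true} := by
  set A : ι → ι → Set Bool := fun v w => if w = v then {true} else {false} with hA
  have hmem : ∀ v ω, ω ∈ (⋂ w ∈ S, Y w ⁻¹' A v w) ↔ ∀ w ∈ S, (Y w ω = true ↔ w = v) := by
    intro v ω
    simp only [Set.mem_iInter, Set.mem_preimage, hA]
    refine forall₂_congr fun w _ => ?_
    split_ifs with h <;> simp [h]
  have hmeas : ∀ v, MeasurableSet (⋂ w ∈ S, Y w ⁻¹' A v w) := fun v =>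
    S.measurableSet_biInter fun w _ => hm w (Set.toFinite _).measurableSet
  have hfalse : ∀ w ∈ S, μ (Y w ⁻¹' {false}) = ENNReal.ofReal (1 - p) := by
    intro w hw
    have : Y w ⁻¹' {false} = {ω | Y w ω = true}ᶜ := by ext ω; simp
    rw [this, prob_compl_eq_one_sub (by exact hm w (measurableSet_singleton true)), hYp w hw,
      ENNReal.ofReal_sub _ hp, ENNReal.ofReal_one]
  have hval : ∀ v ∈ S, μ (⋂ w ∈ S, Y w ⁻¹' A v w) =
      ENNReal.ofReal (p * (1 - p) ^ (S.card - 1)) := by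
    intro v hv
    rw [hY.measure_inter_preimage_eq_mul S fun w _ => (Set.toFinite _).measurableSet,
      ← Finset.mul_prod_erase S _ hv, ENNReal.ofReal_mul hp, ENNReal.ofReal_pow (by linarith),
      ← Finset.card_erase_of_mem hv]
    congr 1
    · simp only [hA, if_true]
      exact hYp v hv
    · refine Finset.prod_eq_pow_card fun w hw => ?_
      simpa [hA, Finset.ne_of_mem_erase hw] using hfalse w (Finset.mem_of_mem_erase hw)
  calc ENNReal.ofReal (S.card * (p * (1 - p) ^ (S.card - 1)))
      = ∑ v ∈ S, μ (⋂ w ∈ S, Y w ⁻¹' A v w) := by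
        rw [Finset.sum_congr rfl hval, Finset.sum_const, nsmul_eq_mul,
          ENNReal.ofReal_mul (by positivity), ENNReal.ofReal_natCast]
    _ = μ (⋃ v ∈ S, ⋂ w ∈ S, Y w ⁻¹' A v w) := by
        refine (measure_biUnion_finset ?_ fun v _ => hmeas v).symm
        intro v hv v' _ hne
        refine Set.disjoint_left.2 fun ω h h' => hne ?_
        exact ((hmem v' ω).1 h' v hv).1 (((hmem v ω).1 h v hv).2 rfl)
    _ ≤ _ := by
        refine measure_mono fun ω hω => ?_
        simp only [Set.mem_iUnion, hmem] at hω
        obtain ⟨v, hv, h⟩ := hω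
        exact ⟨v, ⟨hv, (h v hv).2 rfl⟩, fun w hw => (h w hw.1).1 hw.2⟩

/-- With success probability `2 ^ (-⌊log₂ d⌋)`, exactly one of `d ≥ 1` independent trials succeeds
with probability at least `exp (-2)`. -/
lemma exp_neg_two_le_isolation {d : ℕ} (hd : d ≠ 0) :
    Real.exp (-2) ≤ d * ((2 : ℝ)⁻¹ ^ Nat.log 2 d * (1 - (2 : ℝ)⁻¹ ^ Nat.log 2 d) ^ (d - 1)) := by
  set i := Nat.log 2 d
  have hle : 2 ^ i ≤ d := Nat.pow_log_le_self 2 hd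
  have hlt : d < 2 ^ (i + 1) := Nat.lt_pow_succ_log_self one_lt_two d
  have hm : (0 : ℝ) < 2 ^ i := by positivity
  have hfirst : 1 ≤ d * (2 : ℝ)⁻¹ ^ i := by
    rw [inv_pow, ← div_eq_mul_inv, one_le_div hm]
    exact_mod_cast hle
  have hsecond : Real.exp (-2) ≤ (1 - (2 : ℝ)⁻¹ ^ i) ^ (d - 1) := by
    rcases Nat.eq_zero_or_pos i with h0 | hpos
    · have : d = 1 := by rw [h0] at hlt; simp at hlt; omega
      simp [this]
    · have h2 : (2 : ℝ) ≤ 2 ^ i := by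
        simpa using pow_le_pow_right₀ (one_le_two (α := ℝ)) hpos
      have hx : 0 < 1 - (2 : ℝ)⁻¹ ^ i := by
        rw [inv_pow, sub_pos]
        exact inv_lt_one_of_one_lt₀ (by linarith)
      have hd1 : ((d - 1 : ℕ) : ℝ) ≤ 2 * (2 ^ i - 1) := by
        rw [Nat.cast_sub (by omega)]
        have : (d : ℝ) + 1 ≤ 2 ^ (i + 1) := by exact_mod_cast hlt
        rw [pow_succ] at this
        push_cast
        linarith
      rw [← Real.exp_log hx, ← Real.exp_nat_mul, Real.exp_le_exp]
      have hlog := Real.one_sub_inv_le_log_of_pos hx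
      have heq : 1 - (1 - (2 : ℝ)⁻¹ ^ i)⁻¹ = -(1 / (2 ^ i - 1)) := by
        have : (2 : ℝ) ^ i - 1 ≠ 0 := by linarith
        rw [inv_pow] at hx ⊢
        field_simp
        ring
      rw [heq] at hlog
      have hpos1 : (0 : ℝ) < 2 ^ i - 1 := by linarith
      calc (-2 : ℝ) = 2 * (2 ^ i - 1) * -(1 / (2 ^ i - 1)) := by field_simp
        _ ≤ (d - 1 : ℕ) * -(1 / (2 ^ i - 1)) :=
          mul_le_mul_of_nonpos_right hd1 (by simp; linarith)
        _ ≤ _ := by gcongr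
  calc Real.exp (-2) ≤ 1 * (1 - (2 : ℝ)⁻¹ ^ i) ^ (d - 1) := by rwa [one_mul]
    _ ≤ d * (2 : ℝ)⁻¹ ^ i * (1 - (2 : ℝ)⁻¹ ^ i) ^ (d - 1) := by
      gcongr
      exact (Real.exp_pos _).le.trans hsecond
    _ = _ := mul_assoc _ _ _

/-- If the family `X i j` is independent over all pairs `(i, j)`, then its rows are independent. -/
lemma iIndepFun_rows_of_pairs {ι κ Ω E : Type*} {_ : MeasurableSpace Ω} [MeasurableSpace E]
    {μ : Measure Ω} [IsProbabilityMeasure μ] {X : ι → κ → Ω → E}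
    (hm : ∀ i j, Measurable (X i j)) (h : iIndepFun (fun (p : ι × κ) ω => X p.1 p.2 ω) μ) :
    iIndepFun (fun i ω j => X i j ω) μ := by
  have : ∀ i j, IsProbabilityMeasure (μ.map (X i j)) := fun i j =>
    Measure.isProbabilityMeasure_map (hm i j).aemeasurable
  rw [iIndepFun_iff_map_fun_eq_infinitePi_map (by fun_prop)]
  have hrow : ∀ i, μ.map (fun ω j => X i j ω) = Measure.infinitePi fun j => μ.map (X i j) :=
    fun i => (h.precomp (Prod.mk_right_injective i)).map_fun_eq_infinitePi_map (hm i)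
  have hcurry : (fun ω i j => X i j ω) =
      MeasurableEquiv.curry ι κ E ∘ fun ω (p : ι × κ) => X p.1 p.2 ω := rfl
  simp_rw [hrow]
  rw [hcurry, ← Measure.map_map (by fun_prop) (by fun_prop),
    h.map_fun_eq_infinitePi_map (by fun_prop)]
  exact Measure.infinitePi_map_curry fun i j => μ.map (X i j)

/-- In `T` independent rounds, each isolating a single element of `S` with probability at least
`q`, the probability that no round succeeds is at most `exp (-q T)`. -/
lemma measure_no_existsUnique_le {ι Ω : Type*} [Finite ι] {_ : MeasurableSpace Ω}
    {μ : Measure Ω} [IsProbabilityMeasure μ] {T : ℕ} {Y : Fin T → ι → Ω → Bool}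
    (hm : ∀ j u, Measurable (Y j u))
    (hY : iIndepFun (fun (p : Fin T × ι) ω => Y p.1 p.2 ω) μ) {q : ℝ} (hq : 0 ≤ q)
    (S : Finset ι) (h : ∀ j, ENNReal.ofReal q ≤ μ {ω | ∃! u, u ∈ S ∧ Y j u ω = true}) :
    μ {ω | ∀ j, ¬ ∃! u, u ∈ S ∧ Y j u ω = true} ≤ ENNReal.ofReal (Real.exp (-(q * T))) := by
  have hrows := iIndepFun_rows_of_pairs hm hY
  set B : Set (ι → Bool) := {y | ∃! u, u ∈ S ∧ y u = true}
  have hB : MeasurableSet B := B.toFinite.measurableSet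
  have hone : ∀ j, μ ((fun ω u => Y j u ω) ⁻¹' Bᶜ) ≤ ENNReal.ofReal (Real.exp (-q)) := by
    intro j
    have hmj : Measurable fun ω u => Y j u ω := measurable_pi_lambda _ (hm j)
    rw [Set.preimage_compl, prob_compl_eq_one_sub (hmj hB)]
    calc 1 - μ ((fun ω u => Y j u ω) ⁻¹' B) ≤ 1 - ENNReal.ofReal q := tsub_le_tsub_left (h j) 1
      _ = ENNReal.ofReal (1 - q) := by rw [ENNReal.ofReal_sub _ hq, ENNReal.ofReal_one]
      _ ≤ _ := ENNReal.ofReal_le_ofReal (Real.one_sub_le_exp_neg q)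
  have hset : {ω | ∀ j, ¬ ∃! u, u ∈ S ∧ Y j u ω = true} =
      ⋂ j ∈ Finset.univ, (fun ω u => Y j u ω) ⁻¹' Bᶜ := by
    ext ω; simp [B]
  rw [hset, hrows.measure_inter_preimage_eq_mul Finset.univ fun _ _ => hB.compl]
  calc ∏ j, μ ((fun ω u => Y j u ω) ⁻¹' Bᶜ) ≤ ∏ _j : Fin T, ENNReal.ofReal (Real.exp (-q)) :=
        Finset.prod_le_prod' fun j _ => hone j
    _ = _ := by
        rw [Finset.prod_const, Finset.card_fin, ← ENNReal.ofReal_pow (Real.exp_pos _).le,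
          ← Real.exp_nat_mul]
        congr 2
        ring

/-- Lemma 4.1, probabilistic form: for every `c > 0` there is a constant `C` such that
for every hypergraph of combinatorial size at most `n`, running the abstract HBD
procedure with `⌊log₂ n⌋ + 1` epochs of `T = ⌈C · log₂ n⌉` iterations each —
i.e., with mutually independent Bernoulli variables `X (u, i, j)` of success
probability `2^{-i}` — with probability at least `1 - n^{-c}` every hyperedge `e ℓ`
has some pair `(i, j)` for which exactly one of its vertices `u` satisfies
`X (u, i, j) = 1` (whence the first such pair, used as the color of `e ℓ`, together
with the color sets `cs u = {(i,j) : X (u,i,j) = 1}`, forms a feasible HBD solution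
with palette size `(⌊log₂ n⌋ + 1) · T = O(log² n)`). -/
theorem abstract_hbd_succeeds_whp (c : ℝ) (hc : 0 < c) :
    ∃ C : ℝ, 0 < C ∧ ∀ n : ℕ, 2 ≤ n →
      ∀ (α β : Type) [DecidableEq α] (Vset : Finset α) (I : Finset β)
        (e : β → Finset α),
        (∀ i ∈ I, e i ⊆ Vset) → (∀ i ∈ I, (e i).Nonempty) →
        Vset.card + I.card ≤ n →
        ∀ (Ω : Type) (_ : MeasurableSpace Ω) (μ : Measure Ω),
          IsProbabilityMeasure μ →
          ∀ (X : {x // x ∈ Vset} × Fin (Nat.log 2 n + 1) ×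
                Fin ⌈C * Real.logb 2 n⌉₊ → Ω → Bool),
            (∀ q, Measurable (X q)) →
            iIndepFun X μ →
            (∀ u i j, μ {ω | X (u, i, j) ω = true} =
              ENNReal.ofReal ((2 : ℝ)⁻¹ ^ (i : ℕ))) →
            ENNReal.ofReal (1 - (n : ℝ) ^ (-c)) ≤
              μ {ω | ∀ ℓ ∈ I,
                ∃ (i : Fin (Nat.log 2 n + 1)) (j : Fin ⌈C * Real.logb 2 n⌉₊),
                  ∃! v : α, ∃ hv : v ∈ Vset,
                    v ∈ e ℓ ∧ X (⟨v, hv⟩, i, j) ω = true} := by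
  refine ⟨Real.exp 2 * (c + 1), by positivity, ?_⟩
  intro n hn α β _ Vset I e hsub hne hcard Ω _ μ _
  generalize hTdef : ⌈Real.exp 2 * (c + 1) * Real.logb 2 n⌉₊ = T
  intro X hm hX hp
  have hn0 : (0 : ℝ) < n := by positivity
  have hlog : 0 ≤ Real.log n := Real.log_natCast_nonneg n
  have hT : (c + 1) * Real.log n ≤ Real.exp (-2) * T := by
    have hlogb : Real.log n ≤ Real.logb 2 n := by
      rw [Real.logb, le_div_iff₀ (Real.log_pos one_lt_two)]
      exact mul_le_of_le_one_right hlog (by linarith [Real.log_two_lt_d9])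
    calc (c + 1) * Real.log n = Real.exp (-2) * (Real.exp 2 * (c + 1) * Real.log n) := by
          rw [← mul_assoc, ← mul_assoc, ← Real.exp_add]
          simp
      _ ≤ Real.exp (-2) * (Real.exp 2 * (c + 1) * Real.logb 2 n) := by gcongr
      _ ≤ Real.exp (-2) * T := by gcongr; exact hTdef ▸ Nat.le_ceil _
  have hedge : ∀ ℓ ∈ I, μ {ω | ¬ ∃ (i : Fin (Nat.log 2 n + 1)) (j : Fin T),
      ∃! v : α, ∃ hv : v ∈ Vset, v ∈ e ℓ ∧ X (⟨v, hv⟩, i, j) ω = true} ≤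
        ENNReal.ofReal ((n : ℝ) ^ (-(c + 1))) := by
    intro ℓ hℓ
    set S : Finset {x // x ∈ Vset} := (e ℓ).subtype (· ∈ Vset)
    have hSne : S.card ≠ 0 := by
      obtain ⟨v, hv⟩ := hne ℓ hℓ
      exact Finset.card_ne_zero_of_mem (Finset.mem_subtype.2 hv : ⟨v, hsub ℓ hℓ hv⟩ ∈ S)
    have hSn : S.card ≤ n := by
      have := S.card_le_univ
      rw [Fintype.card_coe] at this
      omega
    let i : Fin (Nat.log 2 n + 1) := ⟨Nat.log 2 S.card, Nat.lt_succ_of_le (Nat.log_mono_right hSn)⟩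
    have hinj : Function.Injective fun p : Fin T × {x // x ∈ Vset} => (p.2, i, p.1) := by
      rintro ⟨j, u⟩ ⟨j', u'⟩ h
      simp_all
    have hrow : ∀ j : Fin T, Function.Injective fun u : {x // x ∈ Vset} => (u, i, j) := by
      intro j u u' h
      simpa using h
    have hround : ∀ j, ENNReal.ofReal (Real.exp (-2)) ≤
        μ {ω | ∃! u, u ∈ S ∧ X (u, i, j) ω = true} := fun j =>
      (ENNReal.ofReal_le_ofReal (exp_neg_two_le_isolation hSne)).trans
        (measure_existsUnique_bernoulli_ge (fun u => hm (u, i, j)) (hX.precomp (hrow j))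
          (by positivity) (pow_le_one₀ (by norm_num) (by norm_num)) S fun u _ => hp u i j)
    have hfail := measure_no_existsUnique_le (Y := fun j u => X (u, i, j)) (fun j u => hm _)
      (hX.precomp hinj) (Real.exp_pos _).le S hround
    refine (measure_mono ?_).trans (hfail.trans ?_)
    · rintro ω hω j hj
      refine hω ⟨i, j, ?_⟩
      obtain ⟨u, ⟨huS, hu⟩, huniq⟩ := hj
      refine ⟨u, ⟨u.2, Finset.mem_subtype.1 huS, hu⟩, ?_⟩
      rintro v ⟨hv, hve, hvX⟩
      exact congrArg Subtype.val (huniq ⟨v, hv⟩ ⟨Finset.mem_subtype.2 hve, hvX⟩)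
    · refine ENNReal.ofReal_le_ofReal ?_
      rw [Real.rpow_def_of_pos hn0, Real.exp_le_exp]
      linarith
  set G : Set Ω := {ω | ∀ ℓ ∈ I, ∃ (i : Fin (Nat.log 2 n + 1)) (j : Fin T),
    ∃! v : α, ∃ hv : v ∈ Vset, v ∈ e ℓ ∧ X (⟨v, hv⟩, i, j) ω = true}
  have hbad : μ Gᶜ ≤ ENNReal.ofReal ((n : ℝ) ^ (-c)) := by
    calc μ Gᶜ ≤ μ (⋃ ℓ ∈ I, {ω | ¬ ∃ (i : Fin (Nat.log 2 n + 1)) (j : Fin T),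
          ∃! v : α, ∃ hv : v ∈ Vset, v ∈ e ℓ ∧ X (⟨v, hv⟩, i, j) ω = true}) := by
          refine measure_mono fun ω hω => ?_
          simp only [G, Set.mem_compl_iff, Set.mem_ofPred_eq, not_forall] at hω
          obtain ⟨ℓ, hℓ, h⟩ := hω
          exact Set.mem_biUnion hℓ h
      _ ≤ ∑ ℓ ∈ I, ENNReal.ofReal ((n : ℝ) ^ (-(c + 1))) :=
          (measure_biUnion_finset_le I _).trans (Finset.sum_le_sum hedge)
      _ = ENNReal.ofReal (I.card * (n : ℝ) ^ (-(c + 1))) := by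
          rw [Finset.sum_const, nsmul_eq_mul, ENNReal.ofReal_mul (by positivity),
            ENNReal.ofReal_natCast]
      _ ≤ ENNReal.ofReal (n * (n : ℝ) ^ (-(c + 1))) := by
          gcongr
          omega
      _ = ENNReal.ofReal ((n : ℝ) ^ (-c)) := by
          rw [← Real.rpow_one_add' hn0.le (by linarith)]
          ring_nf
  rw [ENNReal.ofReal_sub _ (by positivity), ENNReal.ofReal_one, tsub_le_iff_right]
  calc 1 = μ (G ∪ Gᶜ) := by rw [Set.union_compl_self, measure_univ]
    _ ≤ μ G + μ Gᶜ := measure_union_le _ _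
    _ ≤ _ := by gcongr
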